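/- Let a_{n,k} = |S_{n,k}^{1≺n}(1324)|. For all n ≥ 3 and 2 ≤ k ≤ n−1, a_{n,k} = Σ_{m=2}^{n−k+1} a_{m,1} · a_{n−m+1,k−1}. -/

import Mathlib

/-- A permutation of `{1,…,n}` (encoded as `Equiv.Perm (Fin n)` with 0-based values)
avoids the pattern 1324 if there are no indices `i < j < k < l` with
`σ i < σ k < σ j < σ l`. -/
def Avoids1324 {n : ℕ} (σ : Equiv.Perm (Fin n)) : Prop :=
  ¬ ∃ i j k l : Fin n, i < j ∧ j < k ∧ k < l ∧ σ i < σ k ∧ σ k < σ j ∧ σ j < σ l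

/-- The set `S_{n,k}^{a ≺ n}(1324)`: 1324-avoiding permutations with the entry `a`
exactly `k` places to the left of the entry `n`, and the entries `1, …, a-1` all to
the right of `n`.  (Values are 0-based: the entry `a` is `⟨a-1, _⟩`.) -/
def SPerm (n a k : ℕ) : Set (Equiv.Perm (Fin n)) :=
  {σ | Avoids1324 σ ∧ ∃ hn : n - 1 < n, ∃ ha : a - 1 < n,
    ((σ.symm ⟨n - 1, hn⟩ : Fin n) : ℕ) = ((σ.symm ⟨a - 1, ha⟩ : Fin n) : ℕ) + k ∧
    ∀ b : Fin n, (b : ℕ) + 1 < a → σ.symm ⟨n - 1, hn⟩ < σ.symm b}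

/-!
Let `e` be the position just after the entry `1` and let `c` be the entry at `e`. Avoidance of
1324, with the minimum before `e` and the maximum after it, forces the entries below `c` to be
pushed to the right on either side of `e`: they fill the positions directly before `e` and the last
positions of all. Conversely, such a permutation avoids 1324 as soon as its entries `≤ c` and its
entries `≥ c` do, since `e` can replace an outer entry of any 1324 that uses both kinds.
Standardising the two subwords, which overlap in `c` only, is therefore a bijection onto pairs of
1324-avoiders: one of length `c` with `1` directly followed by its maximum, and one in which `1` and
the maximum have moved one step closer. It is inverted by reading the numbers of low entries before
`e` and of high entries before `e` off the positions of `1` in the two parts.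
-/

open Equiv Set

section Avoidance

variable {α β γ δ : Type*}

/-- A function avoids the pattern 1324 on a set of positions. -/
def Avoids1324On [LT α] [LT β] (f : α → β) (s : Set α) : Prop :=
  ∀ ⦃i⦄, i ∈ s → ∀ ⦃j⦄, j ∈ s → ∀ ⦃k⦄, k ∈ s → ∀ ⦃l⦄, l ∈ s →
    i < j → j < k → k < l → f i < f k → f k < f j → ¬ f j < f l

theorem Avoids1324On.mono [LT α] [LT β] {f : α → β} {s t : Set α} (hf : Avoids1324On f t)
    (hst : s ⊆ t) : Avoids1324On f s :=
  fun _ hi _ hj _ hk _ hl => hf (hst hi) (hst hj) (hst hk) (hst hl)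

theorem avoids1324On_image_iff [Preorder α] [LT β] [LinearOrder γ] [LT δ] {f : α → β}
    {g : γ → δ} {u : γ → α} {s : Set γ} (hu : StrictMonoOn u s)
    (hfg : ∀ i ∈ s, ∀ j ∈ s, f (u i) < f (u j) ↔ g i < g j) :
    Avoids1324On f (u '' s) ↔ Avoids1324On g s := by
  simp +contextual only [Avoids1324On, forall_mem_image, hu.lt_iff_lt, hfg]

/-- On either side of the pivot position `e`, the entries smaller than `f e` come last. -/
structure LowsPushedRight [LT α] [LT β] (f : α → β) (s : Set α) (e : α) : Prop where
  left : ∀ ⦃i⦄, i ∈ s → ∀ ⦃j⦄, j ∈ s → i < j → j < e → f i < f e → f j < f e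
  right : ∀ ⦃i⦄, i ∈ s → ∀ ⦃j⦄, j ∈ s → e < i → i < j → f i < f e → f j < f e

variable [LinearOrder β] {f : α → β} {s : Set α} {e : α}

theorem Avoids1324On.lowsPushedRight [Preorder α] (hf : Avoids1324On f s) (hinj : InjOn f s)
    (he : e ∈ s) {p g : α} (hp : p ∈ s) (hg : g ∈ s) (hpe : p < e) (heg : e < g)
    (hmin : ∀ i ∈ s, f p ≤ f i) (hmax : ∀ i ∈ s, f i ≤ f g) : LowsPushedRight f s e where
  left i hi j hj hij hje hie := by
    by_contra hej
    have hej : f e < f j := (not_lt.1 hej).lt_of_ne (hinj.ne he hj hje.ne')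
    have hjg : f j < f g := (hmax j hj).lt_of_ne (hinj.ne hj hg (hje.trans heg).ne)
    exact hf hi hj he hg hij hje heg hie hej hjg
  right i hi j hj hei hij hie := by
    by_contra hej
    have hej : f e < f j := (not_lt.1 hej).lt_of_ne (hinj.ne he hj (hei.trans hij).ne)
    have hpi : f p < f i := (hmin i hi).lt_of_ne (hinj.ne hp hi (hpe.trans hei).ne)
    exact hf hp he hi hj hpe hei hij hpi hie hej

theorem LowsPushedRight.avoids1324On [LinearOrder α] (h : LowsPushedRight f s e)
    (hinj : InjOn f s) (he : e ∈ s) (hlow : Avoids1324On f {i ∈ s | f i ≤ f e})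
    (hhigh : Avoids1324On f {i ∈ s | f e ≤ f i}) :
    Avoids1324On f s := by
  intro i hi j hj k hk l hl hij hjk hkl hik hkj hjl
  rcases le_or_gt (f l) (f e) with hle | hel
  · have hje := hjl.le.trans hle
    have hke := hkj.le.trans hje
    exact hlow ⟨hi, hik.le.trans hke⟩ ⟨hj, hje⟩ ⟨hk, hke⟩ ⟨hl, hle⟩ hij hjk hkl hik hkj hjl
  rcases le_or_gt (f e) (f i) with hei | hie
  · have hek := hei.trans hik.le
    have hej := hek.trans hkj.le
    exact hhigh ⟨hi, hei⟩ ⟨hj, hej⟩ ⟨hk, hek⟩ ⟨hl, hel.le⟩ hij hjk hkl hik hkj hjl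
  -- Now `i` is low and `l` is high: the pivot replaces `l` if `j` is low, and `i` otherwise.
  have low_le : f k < f e → k ≤ e := fun hke =>
    not_lt.1 fun hek => hel.not_gt (h.right hk hl hek hkl hke)
  rcases le_or_gt (f j) (f e) with hje | hej
  · have hke : f k < f e := hkj.trans_le hje
    have hke' : k < e := (low_le hke).lt_of_ne (by rintro rfl; exact hke.false)
    have hje' : f j < f e := hje.lt_of_ne (hinj.ne hj he (hjk.trans hke').ne)
    exact hlow ⟨hi, hie.le⟩ ⟨hj, hje⟩ ⟨hk, hke.le⟩ ⟨he, le_rfl⟩ hij hjk hke' hik hkj hje'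
  · have hej' : e < j := by
      refine lt_of_le_of_ne (not_lt.1 fun hje => ?_) (by rintro rfl; exact hej.false)
      exact hej.not_gt (h.left hi hj hij hje hie)
    have hek : f e < f k := by
      refine lt_of_le_of_ne (not_lt.1 fun hke => ?_) (hinj.ne he hk (hej'.trans hjk).ne)
      exact (low_le hke).not_gt (hej'.trans hjk)
    exact hhigh ⟨he, le_rfl⟩ ⟨hj, hej.le⟩ ⟨hk, hek.le⟩ ⟨hl, hel.le⟩ hej' hjk hkl hek hkj hjl

end Avoidance

theorem exists_threshold {P : ℕ → Prop} {l n : ℕ} (hln : l ≤ n)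
    (hP : ∀ i j, l ≤ i → i < j → j < n → P i → P j) :
    ∃ t, l ≤ t ∧ t ≤ n ∧ ∀ i, l ≤ i → i < n → (P i ↔ t ≤ i) := by
  classical
  have hex : ∃ t, l ≤ t ∧ (t = n ∨ P t) := ⟨n, hln, Or.inl rfl⟩
  obtain ⟨hlt, ht⟩ := Nat.find_spec hex
  refine ⟨Nat.find hex, hlt, Nat.find_min' hex ⟨hln, Or.inl rfl⟩, fun i hli hin => ?_⟩
  refine ⟨fun hi => Nat.find_min' hex ⟨hli, Or.inr hi⟩, fun hti => ?_⟩
  have ht : P (Nat.find hex) := ht.resolve_left (by omega)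
  rcases hti.eq_or_lt with heq | hlt'
  · exact heq ▸ ht
  · exact hP _ i hlt hlt' hin ht

theorem ncard_eq_sum_ncard_fiber {α ι : Type*} {s : Set α} (hs : s.Finite) {t : Finset ι}
    {f : α → ι} (hf : ∀ x ∈ s, f x ∈ t) : s.ncard = ∑ i ∈ t, {x ∈ s | f x = i}.ncard := by
  classical
  lift s to Finset α using hs
  simp only [Finset.mem_coe, ← Finset.coe_filter, ncard_coe_finset]
  exact Finset.card_eq_sum_card_fiberwise hf

section Word

variable {n : ℕ} {σ τ : Perm (Fin n)} {i k v : ℕ}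

/-- The one-line word of a permutation, extended to `ℕ` by the identity, so that positions and
entries are natural numbers and positions have the inverse permutation as their lookup. -/
def word (σ : Perm (Fin n)) : Perm ℕ := σ.extendDomain Fin.equivSubtype

theorem word_val (σ : Perm (Fin n)) (i : Fin n) : word σ i = σ i :=
  Perm.extendDomain_apply_image σ Fin.equivSubtype i

theorem word_symm_val (σ : Perm (Fin n)) (i : Fin n) : (word σ).symm i = σ.symm i :=
  word_val σ.symm i

theorem word_symm (σ : Perm (Fin n)) : word σ.symm = (word σ).symm := rfl

theorem word_lt_iff (σ : Perm (Fin n)) : word σ i < n ↔ i < n := by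
  by_cases hi : i < n
  · simpa only [hi, iff_true] using (word_val σ ⟨i, hi⟩).trans_lt (σ ⟨i, hi⟩).2
  · rw [show word σ i = i from Perm.extendDomain_apply_not_subtype _ _ hi]

theorem word_eq_iff (h : word σ i = v) {j : ℕ} : word σ j = v ↔ j = i := by
  rw [← h, (word σ).injective.eq_iff]

theorem word_ext (h : ∀ i < n, word σ i = word τ i) : σ = τ := by
  ext i
  rw [← word_val, ← word_val, h i i.2]

theorem exists_word_eq {f : ℕ → ℕ} (hmaps : MapsTo f (Iio n) (Iio n)) (hinj : InjOn f (Iio n)) :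
    ∃ σ : Perm (Fin n), ∀ i < n, word σ i = f i := by
  let g : Fin n → Fin n := fun i => ⟨f i, hmaps i.2⟩
  have hg : g.Injective := fun i j hij => Fin.ext (hinj i.2 j.2 (congrArg Fin.val hij))
  exact ⟨.ofBijective g (Finite.injective_iff_bijective.1 hg), fun i hi => word_val _ ⟨i, hi⟩⟩

theorem avoids1324_iff_word : Avoids1324 σ ↔ Avoids1324On (word σ) (Iio n) := by
  have himage : Iio n = Fin.val '' (univ : Set (Fin n)) := by
    rw [image_univ, Fin.range_val]
  rw [himage, avoids1324On_image_iff (g := σ) (Fin.val_strictMono.strictMonoOn _)]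
  · simp only [Avoids1324, Avoids1324On, mem_univ, true_imp_iff, not_exists, not_and]
  · simp only [word_val, Fin.val_fin_lt, implies_true]

/-- The position of the smallest entry. -/
def zeroPos (σ : Perm (Fin n)) : ℕ := (word σ).symm 0

/-- The entry directly to the right of the smallest one. -/
def pivot (σ : Perm (Fin n)) : ℕ := word σ (zeroPos σ + 1)

theorem word_zeroPos (σ : Perm (Fin n)) : word σ (zeroPos σ) = 0 :=
  (word σ).apply_symm_apply 0

theorem zeroPos_eq (h : word σ i = 0) : zeroPos σ = i :=
  (word σ).symm_apply_eq.2 h.symm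

theorem word_pos (h : i ≠ zeroPos σ) : 0 < word σ i :=
  Nat.pos_of_ne_zero fun h0 => h (zeroPos_eq h0).symm

theorem mem_SPerm_one_iff {σ : Perm (Fin (n + 1))} :
    σ ∈ SPerm (n + 1) 1 k ↔
      Avoids1324On (word σ) (Iio (n + 1)) ∧ word σ (zeroPos σ + k) = n := by
  have hzero : zeroPos σ = σ.symm 0 := word_symm_val σ 0
  have hmax : (word σ).symm n = σ.symm (Fin.last n) := word_symm_val σ (Fin.last n)
  rw [← avoids1324_iff_word, ← Equiv.eq_symm_apply, hzero, hmax, eq_comm]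
  simp [SPerm, Fin.last]

theorem zeroPos_lt (σ : Perm (Fin (n + 1))) : zeroPos σ < n + 1 :=
  (word_lt_iff σ).1 (by rw [word_zeroPos]; exact n.succ_pos)

theorem zeroPos_add_le {σ : Perm (Fin (n + 1))} (h : word σ (zeroPos σ + k) ≤ n) :
    zeroPos σ + k ≤ n :=
  Nat.lt_succ_iff.1 ((word_lt_iff σ).1 (Nat.lt_succ_iff.2 h))

theorem pivot_pos (σ : Perm (Fin n)) : 0 < pivot σ :=
  word_pos (Nat.succ_ne_self _)

theorem le_of_mem_SPerm_one {σ : Perm (Fin (n + 1))} (h : σ ∈ SPerm (n + 1) 1 k) : k ≤ n :=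
  le_of_add_le_right (zeroPos_add_le (mem_SPerm_one_iff.1 h).2.le)

theorem pivot_le_of_mem_SPerm_one {σ : Perm (Fin (n + 1))} (h : σ ∈ SPerm (n + 1) 1 (k + 1)) :
    pivot σ ≤ n := by
  have := zeroPos_add_le (mem_SPerm_one_iff.1 h).2.le
  exact Nat.lt_succ_iff.1 ((word_lt_iff σ).2 (by omega))

theorem lowsPushedRight_of_mem_SPerm_one {σ : Perm (Fin (n + 1))}
    (hσ : σ ∈ SPerm (n + 1) 1 (k + 1)) (hk : k ≠ 0) :
    LowsPushedRight (word σ) (Iio (n + 1)) (zeroPos σ + 1) := by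
  obtain ⟨havoid, hmax⟩ := mem_SPerm_one_iff.1 hσ
  have hpos := zeroPos_add_le hmax.le
  have hmin (i : ℕ) : word σ (zeroPos σ) ≤ word σ i := (word_zeroPos σ).trans_le (Nat.zero_le _)
  have hle (i : ℕ) (hi : i < n + 1) : word σ i ≤ word σ (zeroPos σ + (k + 1)) :=
    (Nat.lt_succ_iff.1 ((word_lt_iff σ).2 hi)).trans_eq hmax.symm
  exact havoid.lowsPushedRight (word σ).injective.injOn (p := zeroPos σ)
    (g := zeroPos σ + (k + 1)) (mem_Iio.2 (by omega)) (mem_Iio.2 (by omega))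
    (mem_Iio.2 (by omega)) (by omega) (by omega) (fun i _ => hmin i) hle

theorem card_filter_word_le (σ : Perm (Fin n)) (hv : v < n) :
    ((Finset.range n).filter (word σ · ≤ v)).card = v + 1 := by
  have hmap : ((Finset.range n).filter (word σ · ≤ v)).map (word σ).toEmbedding =
      Finset.range (v + 1) := by
    ext w
    obtain ⟨q, rfl⟩ := (word σ).surjective w
    have := word_lt_iff σ (i := q)
    simp only [Finset.mem_map_equiv, symm_apply_apply, Finset.mem_filter, Finset.mem_range]
    omega
  rw [← Finset.card_map, hmap, Finset.card_range]

theorem succ_eq_of_word_le_iff {a d t : ℕ} (hv : v < n) (hdt : d ≤ t)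
    (h : ∀ q < n, word σ q ≤ v ↔ a ≤ q ∧ q < d ∨ t ≤ q) (hdn : d ≤ n) :
    v + 1 = (d - a) + (n - t) := by
  rw [← card_filter_word_le σ hv, ← Nat.card_Ico, ← Nat.card_Ico, ← Finset.card_union_of_disjoint]
  · congr 1
    ext q
    simp only [Finset.mem_filter, Finset.mem_range, Finset.mem_union, Finset.mem_Ico]
    have := h q
    omega
  · simp only [Finset.disjoint_left, Finset.mem_Ico]
    omega

end Word

section Gluing

/-- Position of the `i`-th entry of the low part in a glued permutation: `a` high entries come
first, then the `b + 2` low entries up to the pivot, then the other `r - a` high entries, then the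
remaining low ones. -/
def lowPos (a b r i : ℕ) : ℕ := if i ≤ b + 1 then a + i else r + i

/-- Position of the `j`-th entry of the high part in a glued permutation, whose low block
`[a, a + b + 1]` ends at the pivot, the entry of index `a` of the high part. -/
def highPos (a b j : ℕ) : ℕ := if j < a then j else j + b + 1

variable {a b c r k q : ℕ}

theorem lowPos_strictMono (har : a ≤ r) : StrictMono (lowPos a b r) := fun i j hij => by
  unfold lowPos
  split_ifs <;> omega

theorem highPos_strictMono : StrictMono (highPos a b) := fun i j hij => by
  unfold highPos
  split_ifs <;> omega

theorem lowPos_zero : lowPos a b r b = a + b := if_pos (Nat.le_succ b)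

theorem lowPos_pivot : lowPos a b r (b + 1) = a + b + 1 := if_pos le_rfl

theorem highPos_add : highPos a b (a + k) = a + b + (k + 1) := by
  rw [highPos, if_neg (by omega)]
  omega

theorem highPos_pivot : highPos a b a = a + b + 1 := highPos_add (k := 0)

theorem lowPos_lt_iff (har : a ≤ r) (hbc : b + 1 ≤ c) {i : ℕ} :
    lowPos a b r i < c + r + 1 ↔ i < c + 1 := by
  unfold lowPos
  split_ifs <;> omega

theorem highPos_lt {j : ℕ} (hbc : b + 1 ≤ c) (hj : j < r + 1) : highPos a b j < c + r + 1 := by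
  unfold highPos
  split_ifs <;> omega

theorem lowPos_ne_highPos {i j : ℕ} (hj : j < r + 1) (hja : j ≠ a) :
    lowPos a b r i ≠ highPos a b j := by
  unfold lowPos highPos
  split_ifs <;> omega

theorem image_lowPos (har : a ≤ r) (hbc : b + 1 ≤ c) :
    lowPos a b r '' Iio (c + 1) =
      {q | q < c + r + 1 ∧ (a ≤ q ∧ q ≤ a + b + 1 ∨ r + b + 2 ≤ q)} := by
  ext q
  simp only [mem_image, mem_Iio, mem_ofPred_eq]
  constructor
  · rintro ⟨i, hi, rfl⟩
    unfold lowPos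
    split_ifs <;> omega
  · intro hq
    refine ⟨if q ≤ a + b + 1 then q - a else q - r, ?_⟩
    unfold lowPos
    split_ifs <;> omega

theorem image_highPos (har : a ≤ r) :
    highPos a b '' Iio (r + 1) = {q | q < a ∨ a + b + 1 ≤ q ∧ q < r + b + 2} := by
  ext q
  simp only [mem_image, mem_Iio, mem_ofPred_eq]
  constructor
  · rintro ⟨j, hj, rfl⟩
    unfold highPos
    split_ifs <;> omega
  · intro hq
    refine ⟨if q < a then q else q - b - 1, ?_⟩
    unfold highPos
    split_ifs <;> omega

theorem mem_image_lowPos_or_highPos (har : a ≤ r) (hbc : b + 1 ≤ c) (hq : q < c + r + 1) :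
    q ∈ lowPos a b r '' Iio (c + 1) ∨ q ∈ highPos a b '' Iio (r + 1) := by
  rw [image_lowPos har hbc, image_highPos har]
  simp only [mem_ofPred_eq]
  omega

/-- The shape of a permutation with pivot `c` that the avoidance of 1324 forces: the low entries,
those `≤ c`, occupy the block `[a, a + b + 1]`, which ends with the smallest entry and the pivot,
and the last positions. The length `c + r + 1` counts the `c + 1` low and the `r + 1` high entries,
the pivot being both. -/
structure IsSplitAt (σ : Perm (Fin (c + r + 1))) (a b : ℕ) : Prop where
  left_le : a ≤ r
  succ_right_le : b + 1 ≤ c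
  word_zero : word σ (a + b) = 0
  word_pivot : word σ (a + b + 1) = c
  word_le_iff : ∀ q < c + r + 1, word σ q ≤ c ↔ a ≤ q ∧ q ≤ a + b + 1 ∨ r + b + 2 ≤ q

namespace IsSplitAt

variable {σ : Perm (Fin (c + r + 1))} {a' b' : ℕ}

theorem left_unique (h : IsSplitAt σ a b) (h' : IsSplitAt σ a' b') : a = a' := by
  have least {x y : ℕ} (h : IsSplitAt σ x y) : IsLeast {q | q < c + r + 1 ∧ word σ q ≤ c} x := by
    have := h.left_le
    have := h.succ_right_le
    refine ⟨⟨by omega, (h.word_le_iff x (by omega)).2 (by omega)⟩, fun q hq => ?_⟩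
    have := (h.word_le_iff q hq.1).1 hq.2
    omega
  exact (least h).unique (least h')

theorem right_unique (h : IsSplitAt σ a b) (h' : IsSplitAt σ a' b') : b = b' := by
  have hsum := (word σ).injective (h.word_zero.trans h'.word_zero.symm)
  have := h.left_unique h'
  omega

theorem le_word_iff (h : IsSplitAt σ a b) (hq : q < c + r + 1) :
    c ≤ word σ q ↔ q < a ∨ a + b + 1 ≤ q ∧ q < r + b + 2 := by
  have hpivot := word_eq_iff h.word_pivot (j := q)
  have := h.word_le_iff q hq
  have := h.left_le
  omega

theorem image_lowPos_eq (h : IsSplitAt σ a b) :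
    lowPos a b r '' Iio (c + 1) = {q ∈ Iio (c + r + 1) | word σ q ≤ c} := by
  rw [image_lowPos h.left_le h.succ_right_le]
  ext q
  exact and_congr_right fun hq => (h.word_le_iff q hq).symm

theorem image_highPos_eq (h : IsSplitAt σ a b) :
    highPos a b '' Iio (r + 1) = {q ∈ Iio (c + r + 1) | c ≤ word σ q} := by
  rw [image_highPos h.left_le]
  ext q
  have := h.left_le
  have := h.succ_right_le
  refine ⟨fun hq => ?_, fun hq => (h.le_word_iff hq.1).1 hq.2⟩
  have hq' : q < c + r + 1 := by rw [mem_ofPred_eq] at hq; omega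
  exact ⟨hq', (h.le_word_iff hq').2 hq⟩

theorem lowsPushedRight (h : IsSplitAt σ a b) :
    LowsPushedRight (word σ) (Iio (c + r + 1)) (a + b + 1) := by
  have low_iff {q : ℕ} (hq : q < c + r + 1) (hne : q ≠ a + b + 1) :
      word σ q < word σ (a + b + 1) ↔ a ≤ q ∧ q ≤ a + b + 1 ∨ r + b + 2 ≤ q := by
    rw [← h.word_le_iff q hq, h.word_pivot]
    exact ⟨le_of_lt, fun hle => hle.lt_of_ne (mt (word_eq_iff h.word_pivot).1 hne)⟩
  have := h.left_le
  constructor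
  · intro i hi j hj hij hje hie
    rw [low_iff hj (by omega)]
    have := (low_iff hi (by omega)).1 hie
    omega
  · intro i hi j hj hei hij hie
    rw [low_iff hj (by omega)]
    have := (low_iff hi (by omega)).1 hie
    omega

end IsSplitAt

theorem LowsPushedRight.exists_isSplitAt {σ : Perm (Fin (c + r + 1))}
    (h : LowsPushedRight (word σ) (Iio (c + r + 1)) (zeroPos σ + 1)) (hc : pivot σ = c) :
    ∃ a b, IsSplitAt σ a b := by
  set p := zeroPos σ
  have hp0 : word σ p = 0 := word_zeroPos σ
  have hpc : word σ (p + 1) = c := hc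
  have hpn : p + 1 < c + r + 1 := (word_lt_iff σ).1 (by omega)
  obtain ⟨a, -, -, ha⟩ := exists_threshold (P := (word σ · < pivot σ)) (Nat.zero_le (p + 1))
    fun i j _ hij hj => h.left (mem_Iio.2 (by omega)) (mem_Iio.2 (by omega)) hij hj
  obtain ⟨t, hpt, htn, ht⟩ := exists_threshold (P := (word σ · < pivot σ)) (Nat.succ_le_of_lt hpn)
    fun i j hpi hij hj => h.right (mem_Iio.2 (by omega)) (mem_Iio.2 hj) hpi hij
  have hap : a ≤ p := (ha p p.zero_le p.lt_succ_self).1 (hp0 ▸ pivot_pos σ)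
  have hlow (q : ℕ) (hq : q < c + r + 1) : word σ q ≤ c ↔ a ≤ q ∧ q < p + 2 ∨ t ≤ q := by
    have := word_eq_iff hpc (j := q)
    have := ha q q.zero_le
    have := ht q
    omega
  have hcard := succ_eq_of_word_le_iff (by omega) hpt hlow hpn
  obtain ⟨b, hb⟩ := Nat.exists_eq_add_of_le hap
  refine ⟨a, b, by omega, by omega, hb ▸ hp0, hb ▸ hpc, fun q hq => ?_⟩
  rw [hlow q hq]
  omega

/-- `σ` is glued from `τ` and `ρ`, which are spelled by its entries `≤ c` and `≥ c`: the split
positions are dictated by the positions of the smallest entries of `ρ` and `τ`. -/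
structure IsGluing (σ : Perm (Fin (c + r + 1))) (τ : Perm (Fin (c + 1))) (ρ : Perm (Fin (r + 1))) :
    Prop where
  word_lowPos : ∀ i < c + 1, word σ (lowPos (zeroPos ρ) (zeroPos τ) r i) = word τ i
  word_highPos : ∀ j < r + 1, word σ (highPos (zeroPos ρ) (zeroPos τ) j) = word ρ j + c

theorem IsSplitAt.exists_isGluing {σ : Perm (Fin (c + r + 1))} (h : IsSplitAt σ a b) :
    ∃ τ ρ, IsGluing σ τ ρ := by
  have low (i) (hi : i < c + 1) : word σ (lowPos a b r i) ≤ c :=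
    (h.image_lowPos_eq.subset (mem_image_of_mem _ hi)).2
  have high (j) (hj : j < r + 1) :
      highPos a b j < c + r + 1 ∧ c ≤ word σ (highPos a b j) :=
    h.image_highPos_eq.subset (mem_image_of_mem _ hj)
  obtain ⟨τ, hτ⟩ := exists_word_eq (f := fun i => word σ (lowPos a b r i))
    (fun i hi => Nat.lt_succ_of_le (low i hi))
    ((word σ).injective.comp (lowPos_strictMono h.left_le).injective).injOn
  obtain ⟨ρ, hρ⟩ := exists_word_eq (n := r + 1) (f := fun j => word σ (highPos a b j) - c)
    (fun j hj => by
      have := (word_lt_iff σ).2 (high j hj).1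
      simp only [mem_Iio]
      omega)
    (fun i hi j hj hij => highPos_strictMono.injective <| (word σ).injective <|
      (tsub_left_inj (high i hi).2 (high j hj).2).1 hij)
  have hb : zeroPos τ = b := zeroPos_eq <| by
    rw [hτ b (by have := h.succ_right_le; omega), lowPos_zero, h.word_zero]
  have ha : zeroPos ρ = a := zeroPos_eq <| by
    rw [hρ a (Nat.lt_succ_of_le h.left_le), highPos_pivot, h.word_pivot, Nat.sub_self]
  refine ⟨τ, ρ, fun i hi => ?_, fun j hj => ?_⟩
  · rw [ha, hb, hτ i hi]
  · rw [ha, hb, hρ j hj, Nat.sub_add_cancel (high j hj).2]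

/-- The position of the entry `v` in the permutation glued from `τ` and `ρ`. -/
def gluePos (τ : Perm (Fin (c + 1))) (ρ : Perm (Fin (r + 1))) (v : ℕ) : ℕ :=
  if v ≤ c then lowPos (zeroPos ρ) (zeroPos τ) r ((word τ).symm v)
  else highPos (zeroPos ρ) (zeroPos τ) ((word ρ).symm (v - c))

section GluePos

variable {τ : Perm (Fin (c + 1))} {ρ : Perm (Fin (r + 1))} {i j v : ℕ}

theorem gluePos_word (hi : i < c + 1) :
    gluePos τ ρ (word τ i) = lowPos (zeroPos ρ) (zeroPos τ) r i := by
  rw [gluePos, if_pos (Nat.lt_succ_iff.1 ((word_lt_iff τ).2 hi)), symm_apply_apply]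

theorem gluePos_word_add (hτ : word τ (zeroPos τ + 1) = c) :
    gluePos τ ρ (word ρ j + c) = highPos (zeroPos ρ) (zeroPos τ) j := by
  rcases eq_or_ne j (zeroPos ρ) with rfl | hj
  · have hlt : zeroPos τ + 1 < c + 1 := Nat.lt_succ_of_le (zeroPos_add_le hτ.le)
    rw [word_zeroPos, zero_add, highPos_pivot, ← lowPos_pivot, ← gluePos_word hlt, hτ]
  · have := word_pos hj
    rw [gluePos, if_neg (by omega), Nat.add_sub_cancel, symm_apply_apply]

theorem eq_word_or_eq_word_add (τ : Perm (Fin (c + 1))) (ρ : Perm (Fin (r + 1)))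
    (hv : v < c + r + 1) :
    (∃ i < c + 1, v = word τ i) ∨ ∃ j < r + 1, j ≠ zeroPos ρ ∧ v = word ρ j + c := by
  rcases le_or_gt v c with hvc | hcv
  · obtain ⟨i, rfl⟩ := (word τ).surjective v
    exact Or.inl ⟨i, (word_lt_iff τ).1 (Nat.lt_succ_of_le hvc), rfl⟩
  · obtain ⟨j, hj⟩ := (word ρ).surjective (v - c)
    refine Or.inr ⟨j, (word_lt_iff ρ).1 (by omega), ?_, by omega⟩
    rintro rfl
    rw [word_zeroPos] at hj
    omega

theorem mapsTo_gluePos (hτ : word τ (zeroPos τ + 1) = c) :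
    MapsTo (gluePos τ ρ) (Iio (c + r + 1)) (Iio (c + r + 1)) := by
  have hρ : zeroPos ρ ≤ r := Nat.lt_succ_iff.1 (zeroPos_lt ρ)
  have hτc : zeroPos τ + 1 ≤ c := zeroPos_add_le hτ.le
  intro v hv
  obtain ⟨i, hi, rfl⟩ | ⟨j, hj, -, rfl⟩ := eq_word_or_eq_word_add τ ρ hv
  · rw [gluePos_word hi]
    exact (lowPos_lt_iff hρ hτc).2 hi
  · rw [gluePos_word_add hτ]
    exact highPos_lt hτc hj

theorem injOn_gluePos (hτ : word τ (zeroPos τ + 1) = c) :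
    InjOn (gluePos τ ρ) (Iio (c + r + 1)) := by
  have hρ : zeroPos ρ ≤ r := Nat.lt_succ_iff.1 (zeroPos_lt ρ)
  intro v hv w hw hvw
  obtain ⟨i, hi, rfl⟩ | ⟨j, hj, hja, rfl⟩ := eq_word_or_eq_word_add τ ρ hv <;>
    obtain ⟨i', hi', rfl⟩ | ⟨j', hj', hja', rfl⟩ := eq_word_or_eq_word_add τ ρ hw <;>
    simp only [gluePos_word, gluePos_word_add hτ, *] at hvw
  · rw [(lowPos_strictMono hρ).injective hvw]
  · exact absurd hvw (lowPos_ne_highPos hj' hja')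
  · exact absurd hvw.symm (lowPos_ne_highPos hj hja)
  · rw [highPos_strictMono.injective hvw]

theorem exists_isGluing (hτ : word τ (zeroPos τ + 1) = c) (ρ : Perm (Fin (r + 1))) :
    ∃ σ : Perm (Fin (c + r + 1)), IsGluing σ τ ρ := by
  obtain ⟨π, hπ⟩ := exists_word_eq (mapsTo_gluePos hτ) (injOn_gluePos (ρ := ρ) hτ)
  refine ⟨π.symm, fun i hi => ?_, fun j hj => ?_⟩ <;> rw [word_symm, symm_apply_eq, hπ]
  · exact (gluePos_word hi).symm
  · have := (word_lt_iff τ).2 hi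
    omega
  · exact (gluePos_word_add hτ).symm
  · have := (word_lt_iff ρ).2 hj
    omega

end GluePos

namespace IsGluing

variable {σ σ' : Perm (Fin (c + r + 1))} {τ τ' : Perm (Fin (c + 1))} {ρ ρ' : Perm (Fin (r + 1))}

theorem word_zeroPos_add (h : IsGluing σ τ ρ) : word σ (zeroPos ρ + zeroPos τ) = 0 := by
  have := h.word_lowPos _ (zeroPos_lt τ)
  rwa [lowPos_zero, word_zeroPos] at this

theorem word_zeroPos_add_succ (h : IsGluing σ τ ρ) :
    word σ (zeroPos ρ + zeroPos τ + 1) = c := by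
  have := h.word_highPos _ (zeroPos_lt ρ)
  rwa [highPos_pivot, word_zeroPos, zero_add] at this

theorem pivot_eq (h : IsGluing σ τ ρ) : pivot σ = c := by
  rw [pivot, zeroPos_eq h.word_zeroPos_add, h.word_zeroPos_add_succ]

theorem word_zeroPos_succ (h : IsGluing σ τ ρ) : word τ (zeroPos τ + 1) = c := by
  obtain ⟨i, hi⟩ := (word τ).surjective c
  have hic : i < c + 1 := (word_lt_iff τ).1 (by omega)
  have hpos := (word_eq_iff h.word_zeroPos_add_succ).1 ((h.word_lowPos i hic).trans hi)
  have := zeroPos_lt ρ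
  have : i = zeroPos τ + 1 := by
    unfold lowPos at hpos
    split_ifs at hpos <;> omega
  rwa [← this]

theorem isSplitAt (h : IsGluing σ τ ρ) : IsSplitAt σ (zeroPos ρ) (zeroPos τ) := by
  have hρ : zeroPos ρ ≤ r := Nat.lt_succ_iff.1 (zeroPos_lt ρ)
  have hτ : zeroPos τ + 1 ≤ c := zeroPos_add_le h.word_zeroPos_succ.le
  refine ⟨hρ, hτ, h.word_zeroPos_add, h.word_zeroPos_add_succ, fun q hq => ?_⟩
  have hlow : q ∈ lowPos (zeroPos ρ) (zeroPos τ) r '' Iio (c + 1) ↔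
      zeroPos ρ ≤ q ∧ q ≤ zeroPos ρ + zeroPos τ + 1 ∨ r + zeroPos τ + 2 ≤ q := by
    rw [image_lowPos hρ hτ]
    exact and_iff_right hq
  rw [← hlow]
  constructor
  · intro hqc
    obtain hq | ⟨j, hj, rfl⟩ := mem_image_lowPos_or_highPos hρ hτ hq
    · exact hq
    · have hj0 : word ρ j = 0 := by
        have := h.word_highPos j hj
        omega
      rw [← zeroPos_eq hj0, highPos_pivot, ← lowPos_pivot]
      exact mem_image_of_mem _ (Nat.lt_succ_of_le hτ)
  · rintro ⟨i, hi, rfl⟩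
    rw [h.word_lowPos i hi]
    exact Nat.lt_succ_iff.1 ((word_lt_iff τ).2 hi)

theorem apply_unique (h : IsGluing σ τ ρ) (h' : IsGluing σ' τ ρ) : σ = σ' := by
  refine word_ext fun q hq => ?_
  obtain ⟨i, hi, rfl⟩ | ⟨j, hj, rfl⟩ :=
    mem_image_lowPos_or_highPos h.isSplitAt.left_le h.isSplitAt.succ_right_le hq
  · rw [h.word_lowPos i hi, h'.word_lowPos i hi]
  · rw [h.word_highPos j hj, h'.word_highPos j hj]

theorem parts_unique (h : IsGluing σ τ ρ) (h' : IsGluing σ τ' ρ') : τ = τ' ∧ ρ = ρ' := by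
  have ha : zeroPos ρ = zeroPos ρ' := h.isSplitAt.left_unique h'.isSplitAt
  have hb : zeroPos τ = zeroPos τ' := h.isSplitAt.right_unique h'.isSplitAt
  refine ⟨word_ext fun i hi => ?_, word_ext fun j hj => ?_⟩
  · rw [← h.word_lowPos i hi, ha, hb, h'.word_lowPos i hi]
  · rw [← Nat.add_right_cancel_iff, ← h.word_highPos j hj, ha, hb, h'.word_highPos j hj]

theorem avoids_iff (h : IsGluing σ τ ρ) :
    Avoids1324On (word σ) (Iio (c + r + 1)) ↔
      Avoids1324On (word τ) (Iio (c + 1)) ∧ Avoids1324On (word ρ) (Iio (r + 1)) := by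
  have hs := h.isSplitAt
  have hlow : Avoids1324On (word σ) {q ∈ Iio (c + r + 1) | word σ q ≤ c} ↔
      Avoids1324On (word τ) (Iio (c + 1)) := by
    rw [← hs.image_lowPos_eq]
    refine avoids1324On_image_iff ((lowPos_strictMono hs.left_le).strictMonoOn _) ?_
    intro i hi j hj
    rw [h.word_lowPos i hi, h.word_lowPos j hj]
  have hhigh : Avoids1324On (word σ) {q ∈ Iio (c + r + 1) | c ≤ word σ q} ↔
      Avoids1324On (word ρ) (Iio (r + 1)) := by
    rw [← hs.image_highPos_eq]
    refine avoids1324On_image_iff (highPos_strictMono.strictMonoOn _) ?_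
    intro i hi j hj
    rw [h.word_highPos i hi, h.word_highPos j hj, Nat.add_lt_add_iff_right]
  rw [← hlow, ← hhigh]
  refine ⟨fun hσ => ⟨hσ.mono (sep_subset _ _), hσ.mono (sep_subset _ _)⟩, fun ⟨hl, hh⟩ => ?_⟩
  refine hs.lowsPushedRight.avoids1324On (word σ).injective.injOn ?_ ?_ ?_
  · exact (word_lt_iff σ).1 (by rw [hs.word_pivot]; omega)
  · rwa [hs.word_pivot]
  · rwa [hs.word_pivot]

theorem word_max_iff (h : IsGluing σ τ ρ) (hk : k ≠ 0) :
    word σ (zeroPos σ + (k + 1)) = c + r ↔ word ρ (zeroPos ρ + k) = r := by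
  have hs := h.isSplitAt
  rw [zeroPos_eq hs.word_zero]
  constructor
  · intro hmax
    have hlt := (word_lt_iff σ).1 (hmax.trans_lt (Nat.lt_succ_self _))
    have hk' : zeroPos ρ + k < r + 1 := by
      by_contra hk'
      have hle := (hs.word_le_iff _ hlt).2 (by omega)
      have := (word_eq_iff hs.word_pivot).1 (hle.antisymm (by omega))
      omega
    have := h.word_highPos _ hk'
    rw [highPos_add, hmax] at this
    omega
  · intro hmax
    have := h.word_highPos _ (Nat.lt_succ_of_le (zeroPos_add_le hmax.le))
    rw [highPos_add, hmax] at this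
    exact this.trans (add_comm r c)

theorem mem_SPerm_one_iff (h : IsGluing σ τ ρ) (hk : k ≠ 0) :
    σ ∈ SPerm (c + r + 1) 1 (k + 1) ↔ τ ∈ SPerm (c + 1) 1 1 ∧ ρ ∈ SPerm (r + 1) 1 k := by
  rw [_root_.mem_SPerm_one_iff, _root_.mem_SPerm_one_iff, _root_.mem_SPerm_one_iff,
    h.avoids_iff, h.word_max_iff hk, and_iff_left h.word_zeroPos_succ, and_assoc]

end IsGluing

theorem exists_isGluing_of_mem_SPerm_one {σ : Perm (Fin (c + r + 1))}
    (hσ : σ ∈ SPerm (c + r + 1) 1 (k + 1)) (hk : k ≠ 0) (hc : pivot σ = c) :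
    ∃ τ ρ, IsGluing σ τ ρ :=
  have ⟨_, _, h⟩ := (lowsPushedRight_of_mem_SPerm_one hσ hk).exists_isSplitAt hc
  h.exists_isGluing

end Gluing

theorem ncard_SPerm_one_pivot_eq (c r : ℕ) {k : ℕ} (hk : k ≠ 0) :
    {σ ∈ SPerm (c + r + 1) 1 (k + 1) | pivot σ = c}.ncard =
      (SPerm (c + 1) 1 1).ncard * (SPerm (r + 1) 1 k).ncard := by
  have hglue : ∀ x ∈ SPerm (c + 1) 1 1 ×ˢ SPerm (r + 1) 1 k,
      ∃ σ : Perm (Fin (c + r + 1)), IsGluing σ x.1 x.2 :=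
    fun x hx => exists_isGluing (mem_SPerm_one_iff.1 hx.1).2 x.2
  choose glue glue_spec using hglue
  rw [← ncard_prod]
  refine (ncard_congr glue (fun x hx => ?_) (fun x y hx hy hxy => ?_) fun σ hσ => ?_).symm
  · exact ⟨((glue_spec x hx).mem_SPerm_one_iff hk).2 hx, (glue_spec x hx).pivot_eq⟩
  · exact Prod.ext_iff.2 ((glue_spec x hx).parts_unique (hxy ▸ glue_spec y hy))
  · obtain ⟨τ, ρ, h⟩ := exists_isGluing_of_mem_SPerm_one hσ.1 hk hσ.2
    have hx : (τ, ρ) ∈ SPerm (c + 1) 1 1 ×ˢ SPerm (r + 1) 1 k := (h.mem_SPerm_one_iff hk).1 hσ.1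
    exact ⟨(τ, ρ), hx, (glue_spec _ hx).apply_unique h⟩

theorem pivot_add_le_of_mem_SPerm_one {n k : ℕ} {σ : Perm (Fin (n + 1))}
    (hσ : σ ∈ SPerm (n + 1) 1 (k + 1)) (hk : k ≠ 0) : pivot σ + k ≤ n := by
  obtain ⟨r, hr⟩ := Nat.exists_eq_add_of_le (pivot_le_of_mem_SPerm_one hσ)
  generalize hc : pivot σ = c at hr ⊢
  subst hr
  obtain ⟨τ, ρ, h⟩ := exists_isGluing_of_mem_SPerm_one hσ hk hc
  exact Nat.add_le_add_left (le_of_mem_SPerm_one ((h.mem_SPerm_one_iff hk).1 hσ).2) c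

/-- with `a_{n,k} = |S_{n,k}^{1≺n}(1324)|`, for `n ≥ 3` and `2 ≤ k ≤ n-1`,
`a_{n,k} = Σ_{m=2}^{n-k+1} a_{m,1} ⬝ a_{n-m+1,k-1}`. -/
theorem stmt_5 (n k : ℕ) (hn : 3 ≤ n) (hk : 2 ≤ k) (hkn : k ≤ n - 1) :
    (SPerm n 1 k).ncard =
      ∑ m ∈ Finset.Icc 2 (n - k + 1),
        (SPerm m 1 1).ncard * (SPerm (n - m + 1) 1 (k - 1)).ncard := by
  obtain ⟨n, rfl⟩ := Nat.exists_eq_add_of_le' (show 1 ≤ n by omega)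
  obtain ⟨k, rfl⟩ := Nat.exists_eq_add_of_le' (show 1 ≤ k by omega)
  have hk0 : k ≠ 0 := by omega
  have hpivot (σ) (hσ : σ ∈ SPerm (n + 1) 1 (k + 1)) :
      pivot σ + 1 ∈ Finset.Icc 2 (n + 1 - (k + 1) + 1) := by
    have := pivot_pos σ
    have := pivot_add_le_of_mem_SPerm_one hσ hk0
    rw [Finset.mem_Icc]
    omega
  rw [ncard_eq_sum_ncard_fiber (toFinite _) hpivot]
  refine Finset.sum_congr rfl fun m hm => ?_
  rw [Finset.mem_Icc] at hm
  obtain ⟨c, rfl⟩ := Nat.exists_eq_add_of_le' (show 1 ≤ m by omega)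
  obtain ⟨r, rfl⟩ := Nat.exists_eq_add_of_le (show c ≤ n by omega)
  have hr : c + r + 1 - (c + 1) = r := by omega
  simp only [Nat.add_right_cancel_iff, Nat.add_sub_cancel]
  rw [hr]
  exact ncard_SPerm_one_pivot_eq c r hk0
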